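/- arXiv:2103.06358 — 4 statements merged into one kernel-verified Lean document; each statement's English description precedes it below -/
import Mathlib

section
/- For every p ∈ (2,∞), every real-valued martingale (X_n)_{n≥1} (with X_0 = 0) such that E[|X_j|^p] < ∞ for j = 1,…,n, one has E[S_n(X)^p] ≤ 2p·E[S_n(X)^{p−2}·(X_n*)^2]. -/
open MeasureTheory Finset

/-!
The increments `A_k - A_{k-1} = (ΔX_k)^2` of `A = S^2` satisfy, by convexity of `t ↦ t^(p/2)`,
`A_n^(p/2) ≤ (p/2) ∑_k A_k^(p/2-1) (ΔX_k)^2`. The weights `a_k = A_k^(p/2-1)` are nondecreasing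
and start at `0`, so summation by parts turns the right-hand sum into
`∑_j (a_j - a_{j-1}) ∑_{k ≥ j} (ΔX_k)^2`. Expanding the square `(X_n - X_{j-1})^2` gives
`∑_{k ≥ j} (ΔX_k)^2 = (X_n - X_{j-1})^2 - 2 ∑_{k > j} (X_{k-1} - X_{j-1}) ΔX_k`; after multiplying
by `a_j - a_{j-1}` and summing over `j`, the cross terms become a martingale transform of `X` with
predictable coefficients (`drift`), which has expectation zero. Since
`(X_n - X_{j-1})^2 ≤ 4 (X_n^*)^2` and the differences `a_j - a_{j-1}` telescope to `a_n`, the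
factor `4 * (p/2) = 2p` results.

The algebra and the convexity are carried out for deterministic sequences (`sqSum_rpow_le`). All
random variables involved are dominated by a multiple of `(∑_i |X_i|)^p`, which is integrable.
-/

namespace SquareFunction

/-- The squared square function `∑_{i < m} (x (i+1) - x i)^2` of a sequence, with increments
indexed from `0`. -/
noncomputable def sqSum (x : ℕ → ℝ) (m : ℕ) : ℝ := ∑ i ∈ range m, (x (i + 1) - x i) ^ 2

/-- The coefficient of the increment `x (m+1) - x m` in the martingale transform produced by
summation by parts. It depends only on `x 0, …, x m`, hence is predictable. -/
noncomputable def drift (r : ℝ) (x : ℕ → ℝ) (m : ℕ) : ℝ :=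
  ∑ j ∈ range m, (sqSum x (j + 1) ^ r - sqSum x j ^ r) * (x m - x j)

lemma sqSum_succ (x : ℕ → ℝ) (m : ℕ) :
    sqSum x (m + 1) = sqSum x m + (x (m + 1) - x m) ^ 2 := sum_range_succ _ _

lemma sqSum_nonneg (x : ℕ → ℝ) (m : ℕ) : 0 ≤ sqSum x m := sum_nonneg fun _ _ => sq_nonneg _

lemma sqSum_mono (x : ℕ → ℝ) : Monotone (sqSum x) :=
  monotone_nat_of_le_succ fun m => by rw [sqSum_succ]; nlinarith [sq_nonneg (x (m + 1) - x m)]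

lemma wt_mono {r : ℝ} (hr : 0 ≤ r) (x : ℕ → ℝ) : Monotone fun m => sqSum x m ^ r :=
  fun _ _ h => Real.rpow_le_rpow (sqSum_nonneg _ _) (sqSum_mono x h) hr

lemma sum_wt_sub {r : ℝ} (hr : 0 < r) (x : ℕ → ℝ) (m : ℕ) :
    ∑ j ∈ range m, (sqSum x (j + 1) ^ r - sqSum x j ^ r) = sqSum x m ^ r := by
  rw [sum_range_sub fun j => sqSum x j ^ r]
  simp [sqSum, Real.zero_rpow hr.ne']

/-- The tangent-line inequality for the convex function `t ↦ t ^ (r + 1)` on `[0, ∞)`, taken at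
the right endpoint. -/
lemma rpow_sub_le {r u v : ℝ} (hr : 0 ≤ r) (hu : 0 ≤ u) (huv : u ≤ v) :
    v ^ (r + 1) - u ^ (r + 1) ≤ (r + 1) * (v ^ r * (v - u)) := by
  rcases (hu.trans huv).eq_or_lt with h | hv
  · have : u = 0 := le_antisymm (h ▸ huv) hu
    simp [← h, this]
  have hb := one_add_mul_self_le_rpow_one_add (s := u / v - 1)
    (by linarith [div_nonneg hu hv.le]) (p := r + 1) (by linarith)
  have h1 : (1 + (u / v - 1)) = u / v := by ring
  rw [h1, Real.div_rpow hu hv.le, le_div_iff₀ (by positivity), Real.rpow_add_one hv.ne'] at hb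
  rw [Real.rpow_add_one hv.ne']
  have h2 : (1 + (r + 1) * (u / v - 1)) * (v ^ r * v)
      = v ^ r * v + (r + 1) * (v ^ r * (u - v)) := by field_simp
  rw [h2] at hb
  nlinarith

lemma rpow_le_sum {r : ℝ} (hr : 0 ≤ r) (x : ℕ → ℝ) (m : ℕ) :
    sqSum x m ^ (r + 1) ≤
      (r + 1) * ∑ k ∈ range m, sqSum x (k + 1) ^ r * (x (k + 1) - x k) ^ 2 := by
  induction m with
  | zero => simp [sqSum, Real.zero_rpow (by linarith : r + 1 ≠ 0)]
  | succ m ih =>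
    have h := rpow_sub_le hr (sqSum_nonneg x m) (sqSum_mono x m.le_succ)
    rw [Nat.succ_eq_add_one] at h
    rw [sum_range_succ]
    have : sqSum x (m + 1) - sqSum x m = (x (m + 1) - x m) ^ 2 := by rw [sqSum_succ]; ring
    rw [this] at h
    linarith

/-- Summation by parts together with the expansion of the squares `(x m - x j) ^ 2`. -/
lemma sum_by_parts {r : ℝ} (hr : 0 < r) (x : ℕ → ℝ) (m : ℕ) :
    ∑ k ∈ range m, sqSum x (k + 1) ^ r * (x (k + 1) - x k) ^ 2 =
      ∑ j ∈ range m, (sqSum x (j + 1) ^ r - sqSum x j ^ r) * (x m - x j) ^ 2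
        - 2 * ∑ k ∈ range m, drift r x k * (x (k + 1) - x k) := by
  induction m with
  | zero => simp
  | succ m ih =>
    rw [sum_range_succ, sum_range_succ, sum_range_succ, ih]
    have h : ∑ j ∈ range m, (sqSum x (j + 1) ^ r - sqSum x j ^ r) * (x (m + 1) - x j) ^ 2 =
        ∑ j ∈ range m, (sqSum x (j + 1) ^ r - sqSum x j ^ r) * (x m - x j) ^ 2
          + 2 * (drift r x m * (x (m + 1) - x m))
          + sqSum x m ^ r * (x (m + 1) - x m) ^ 2 := by
      rw [← sum_wt_sub hr x m, drift, sum_mul, sum_mul, mul_sum, ← sum_add_distrib,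
        ← sum_add_distrib]
      exact sum_congr rfl fun j _ => by ring
    rw [h]
    ring

/-- The pathwise inequality: up to a martingale transform, the claim holds for each path. -/
lemma sqSum_rpow_le {r : ℝ} (hr : 0 < r) (x : ℕ → ℝ) (n : ℕ) {M : ℝ}
    (hM : ∀ j ≤ n, |x j| ≤ M) :
    sqSum x n ^ (r + 1) ≤ 4 * (r + 1) * (sqSum x n ^ r * M ^ 2)
      - 2 * (r + 1) * ∑ k ∈ range n, drift r x k * (x (k + 1) - x k) := by
  have h1 := rpow_le_sum hr.le x n
  rw [sum_by_parts hr] at h1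
  have h2 : ∑ j ∈ range n, (sqSum x (j + 1) ^ r - sqSum x j ^ r) * (x n - x j) ^ 2 ≤
      sqSum x n ^ r * (4 * M ^ 2) := by
    rw [← sum_wt_sub hr x n, sum_mul]
    refine sum_le_sum fun j hj => mul_le_mul_of_nonneg_left ?_
      (sub_nonneg.2 (wt_mono hr.le x j.le_succ))
    have h3 := abs_le.1 (hM n le_rfl)
    have h4 := abs_le.1 (hM j (mem_range.1 hj).le)
    nlinarith
  nlinarith

lemma sqSum_rpow_le_bound {r : ℝ} (hr : 0 < r) (x : ℕ → ℝ) (n : ℕ) {R : ℝ}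
    (hR : ∀ j ≤ n, |x j| ≤ R) :
    sqSum x n ^ r ≤ (n * 4) ^ r * (R ^ 2) ^ r := by
  rw [← Real.mul_rpow (by positivity) (by positivity)]
  refine Real.rpow_le_rpow (sqSum_nonneg _ _) ?_ hr.le
  calc sqSum x n ≤ ∑ i ∈ range n, 4 * R ^ 2 := by
        refine sum_le_sum fun i hi => ?_
        have h3 := abs_le.1 (hR i (mem_range.1 hi).le)
        have h4 := abs_le.1 (hR (i + 1) (mem_range.1 hi))
        nlinarith
    _ = _ := by simp; ring

lemma wt_mul_sq_bound {r : ℝ} (hr : 0 < r) (x : ℕ → ℝ) (n : ℕ) {M R : ℝ}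
    (hR : ∀ j ≤ n, |x j| ≤ R) (hM0 : 0 ≤ M) (hMR : M ≤ R) :
    |sqSum x n ^ r * M ^ 2| ≤ (n * 4) ^ r * (R ^ 2) ^ (r + 1) := by
  rw [abs_of_nonneg (mul_nonneg (Real.rpow_nonneg (sqSum_nonneg _ _) _) (sq_nonneg _)),
    Real.rpow_add_one' (sq_nonneg _) (by linarith), ← mul_assoc]
  exact mul_le_mul (sqSum_rpow_le_bound hr x n hR) (pow_le_pow_left₀ hM0 hMR 2)
    (by positivity) (by positivity)

/-- Domination of each half of a term of the martingale transform, used for integrability with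
`R = ∑ i, |X i|`; `(R ^ 2) ^ (r + 1)` is then `R ^ p` for `p = 2 * (r + 1)`. -/
lemma drift_bound {r : ℝ} (hr : 0 < r) (x : ℕ → ℝ) (n : ℕ) {R : ℝ}
    (hR : ∀ j ≤ n, |x j| ≤ R) {k i : ℕ} (hk : k ≤ n) (hi : i ≤ n) :
    |drift r x k * x i| ≤ (2 * (n * 4) ^ r) * (R ^ 2) ^ (r + 1) := by
  have hR0 : 0 ≤ R := (abs_nonneg _).trans (hR 0 n.zero_le)
  have h1 : |drift r x k| ≤ sqSum x n ^ r * (2 * R) := by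
    calc |drift r x k| ≤ ∑ j ∈ range k, (sqSum x (j + 1) ^ r - sqSum x j ^ r) * (2 * R) := by
          refine (abs_sum_le_sum_abs _ _).trans (sum_le_sum fun j hj => ?_)
          rw [abs_mul, abs_of_nonneg (sub_nonneg.2 (wt_mono hr.le x j.le_succ))]
          refine mul_le_mul_of_nonneg_left ?_ (sub_nonneg.2 (wt_mono hr.le x j.le_succ))
          have := abs_sub (x k) (x j)
          linarith [hR k hk, hR j ((mem_range.1 hj).le.trans hk)]
      _ = sqSum x k ^ r * (2 * R) := by rw [← sum_mul, sum_wt_sub hr]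
      _ ≤ _ := mul_le_mul_of_nonneg_right (wt_mono hr.le x hk) (by positivity)
  have h2 := sqSum_rpow_le_bound hr x n hR
  rw [abs_mul, Real.rpow_add_one' (sq_nonneg _) (by linarith)]
  calc |drift r x k| * |x i| ≤ ((n * 4) ^ r * (R ^ 2) ^ r * (2 * R)) * R :=
        mul_le_mul (h1.trans (mul_le_mul_of_nonneg_right h2 (by positivity))) (hR i hi)
          (abs_nonneg _) (by positivity)
    _ = _ := by ring

section Probability

variable {Ω : Type*} {m0 : MeasurableSpace Ω} {μ : Measure Ω} {ℱ : Filtration ℕ m0}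
  {X : ℕ → Ω → ℝ}

lemma measurable_sqSum {m : MeasurableSpace Ω} {k : ℕ} (h : ∀ j ≤ k, Measurable (X j)) :
    Measurable fun ω => sqSum (fun j => X j ω) k := by
  unfold sqSum
  refine Finset.measurable_fun_sum _ fun i hi => ?_
  exact ((h _ (mem_range.1 hi)).sub (h _ (mem_range.1 hi).le)).pow_const 2

lemma measurable_drift {m : MeasurableSpace Ω} {k : ℕ} (r : ℝ)
    (h : ∀ j ≤ k, Measurable (X j)) :
    Measurable fun ω => drift r (fun j => X j ω) k := by
  unfold drift
  refine Finset.measurable_fun_sum _ fun i hi => ?_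
  have hi := mem_range.1 hi
  exact (((measurable_sqSum fun j hj => h j (by lia)).pow_const r).sub
    ((measurable_sqSum fun j hj => h j (by lia)).pow_const r)).mul
    ((h _ le_rfl).sub (h _ hi.le))

/-- A martingale increment is orthogonal to the past. -/
lemma integral_mul_increment [IsProbabilityMeasure μ] (hX : Martingale X ℱ μ) (k : ℕ) {H : Ω → ℝ}
    (hH : Measurable[ℱ k] H) (hint : Integrable (fun ω => H ω * (X (k + 1) ω - X k ω)) μ) :
    ∫ ω, H ω * (X (k + 1) ω - X k ω) ∂μ = 0 := by
  have hd : Integrable (X (k + 1) - X k) μ := (hX.integrable _).sub (hX.integrable _)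
  have h1 : μ[H * (X (k + 1) - X k)|ℱ k] =ᵐ[μ] H * μ[X (k + 1) - X k|ℱ k] :=
    condExp_mul_of_stronglyMeasurable_left hH.stronglyMeasurable hint hd
  have h2 : μ[X (k + 1) - X k|ℱ k] =ᵐ[μ] 0 := by
    filter_upwards [condExp_sub (hX.integrable (k + 1)) (hX.integrable k) (ℱ k),
      hX.condExp_ae_eq k.le_succ, hX.condExp_ae_eq (le_refl k)] with ω h3 h4 h5
    rw [h3, Pi.sub_apply, h4, h5]
    simp
  have h3 : μ[H * (X (k + 1) - X k)|ℱ k] =ᵐ[μ] 0 := by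
    filter_upwards [h1, h2] with ω h4 h5
    rw [h4, Pi.mul_apply, h5]
    simp
  have h4 := integral_condExp (μ := μ) (f := H * (X (k + 1) - X k)) (ℱ.le k)
  rw [integral_congr_ae h3] at h4
  simpa using h4.symm

end Probability

end SquareFunction

open SquareFunction

/-- For every `p ∈ (2,∞)` and every real-valued martingale `(X_n)` with `X_0 = 0`
such that `E[|X_j|^p] < ∞` for `j = 1,…,n`, one has
`E[S_n(X)^p] ≤ 2p·E[S_n(X)^{p−2}·(X_n*)^2]`. -/
theorem square_function_self_improvement (p : ℝ) (hp : 2 < p)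
    {Ω : Type*} {m0 : MeasurableSpace Ω} {μ : Measure Ω} [IsProbabilityMeasure μ]
    (ℱ : Filtration ℕ m0) (X : ℕ → Ω → ℝ) (hX : Martingale X ℱ μ) (hX0 : X 0 = 0)
    (n : ℕ) (hn : 1 ≤ n)
    (hint : ∀ j, 1 ≤ j → j ≤ n → Integrable (fun ω => |X j ω| ^ p) μ) :
    ∫ ω, ((∑ j ∈ Finset.Icc 1 n, (X j ω - X (j - 1) ω) ^ 2) ^ (1 / 2 : ℝ)) ^ p ∂μ ≤
      2 * p * ∫ ω, ((∑ j ∈ Finset.Icc 1 n, (X j ω - X (j - 1) ω) ^ 2) ^ (1 / 2 : ℝ)) ^ (p - 2) *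
        (⨆ j ∈ Finset.Icc 1 n, |X j ω|) ^ 2 ∂μ := by
  -- With `p = 2 * (r + 1)`, `S ^ p = A ^ (r + 1)` and `S ^ (p - 2) = A ^ r` for `A = S ^ 2`.
  obtain ⟨r, hr, rfl⟩ : ∃ r : ℝ, 0 < r ∧ p = 2 * (r + 1) := ⟨p / 2 - 1, by linarith, by ring⟩
  set M : Ω → ℝ := fun ω => ⨆ j ∈ Finset.Icc 1 n, |X j ω| with hMdef
  set R : Ω → ℝ := fun ω => ∑ i ∈ range (n + 1), |X i ω| with hRdef
  have hA : ∀ ω, ∑ j ∈ Finset.Icc 1 n, (X j ω - X (j - 1) ω) ^ 2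
      = sqSum (fun j => X j ω) n := fun ω => by
    rw [sqSum, ← Finset.Ico_succ_right_eq_Icc, Finset.sum_Ico_eq_sum_range]
    exact sum_congr (by simp) fun i _ => by rw [add_comm 1 i]; simp
  have hS1 : ∀ ω, (sqSum (fun j => X j ω) n ^ (1 / 2 : ℝ)) ^ (2 * (r + 1))
      = sqSum (fun j => X j ω) n ^ (r + 1) := fun ω => by
    rw [← Real.rpow_mul (sqSum_nonneg _ _)]; congr 1; ring
  have hS2 : ∀ ω, (sqSum (fun j => X j ω) n ^ (1 / 2 : ℝ)) ^ (2 * (r + 1) - 2)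
      = sqSum (fun j => X j ω) n ^ r := fun ω => by
    rw [← Real.rpow_mul (sqSum_nonneg _ _)]; congr 1; ring
  simp only [hA, hS1, hS2]
  have hR : ∀ ω, ∀ j ≤ n, |X j ω| ≤ R ω := fun ω j hj =>
    single_le_sum (f := fun i => |X i ω|) (fun _ _ => abs_nonneg _) (mem_range.2 (by lia))
  have hR0 : ∀ ω, 0 ≤ R ω := fun ω => sum_nonneg fun _ _ => abs_nonneg _
  -- For `j` outside `Icc 1 n` the inner supremum is the supremum of the empty set, which is `0`.
  have hinner : ∀ ω j, ⨆ (_ : j ∈ Finset.Icc 1 n), |X j ω| ≤ R ω := fun ω j =>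
    Real.iSup_le (fun hj => hR ω j (Finset.mem_Icc.1 hj).2) (hR0 ω)
  have hMR : ∀ ω, M ω ≤ R ω := fun ω => Real.iSup_le (hinner ω) (hR0 ω)
  have hM0 : ∀ ω, 0 ≤ M ω := fun ω =>
    Real.iSup_nonneg fun j => Real.iSup_nonneg fun _ => abs_nonneg _
  have hM : ∀ ω, ∀ j ≤ n, |X j ω| ≤ M ω := fun ω j hj => by
    rcases Nat.eq_zero_or_pos j with rfl | hj1
    · simpa [hX0] using hM0 ω
    have hmem : j ∈ Finset.Icc 1 n := Finset.mem_Icc.2 ⟨hj1, hj⟩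
    have := le_ciSup (f := fun j => ⨆ (_ : j ∈ Finset.Icc 1 n), |X j ω|)
      ⟨R ω, by rintro _ ⟨i, rfl⟩; exact hinner ω i⟩ j
    simpa only [ciSup_pos hmem] using this
  have hXm : ∀ j, Measurable (X j) := fun j => (hX.stronglyMeasurable j).measurable.mono (ℱ.le j) le_rfl
  have hMm : Measurable M := Measurable.iSup fun j => Measurable.iSup fun _ => (hXm j).abs
  have hRint : Integrable (fun ω => (R ω ^ 2) ^ (r + 1)) μ := by
    have hp0 : ENNReal.ofReal (2 * (r + 1)) ≠ 0 := by simpa using by linarith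
    have hmem : ∀ i ∈ range (n + 1), MemLp (fun ω => |X i ω|) (ENNReal.ofReal (2 * (r + 1))) μ := by
      intro i hi
      rcases Nat.eq_zero_or_pos i with rfl | hi1
      · simp [hX0]
      rw [← integrable_norm_rpow_iff (hXm i).abs.aestronglyMeasurable hp0 ENNReal.ofReal_ne_top,
        ENNReal.toReal_ofReal (by linarith)]
      simpa using hint i hi1 (by have := mem_range.1 hi; lia)
    have h := (memLp_finsetSum _ hmem).integrable_norm_rpow hp0 ENNReal.ofReal_ne_top
    rw [ENNReal.toReal_ofReal (by linarith)] at h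
    refine h.congr (Filter.Eventually.of_forall fun ω => ?_)
    change ‖R ω‖ ^ (2 * (r + 1)) = _
    rw [Real.norm_of_nonneg (hR0 ω), Real.rpow_mul (hR0 ω), Real.rpow_two]
  have hWint : Integrable (fun ω => sqSum (fun j => X j ω) n ^ r * M ω ^ 2) μ :=
    (hRint.const_mul ((n * 4 : ℝ) ^ r)).mono'
      (((measurable_sqSum fun j _ => hXm j).pow_const r).mul
        (hMm.pow_const 2)).aestronglyMeasurable
      (Filter.Eventually.of_forall fun ω => wt_mul_sq_bound hr _ n (hR ω) (hM0 ω) (hMR ω))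
  have hDXint : ∀ k ≤ n, ∀ i ≤ n, Integrable (fun ω => drift r (fun j => X j ω) k * X i ω) μ :=
    fun k hk i hi => (hRint.const_mul (2 * (n * 4 : ℝ) ^ r)).mono'
      ((measurable_drift r fun j _ => hXm j).mul (hXm i)).aestronglyMeasurable
      (Filter.Eventually.of_forall fun ω => drift_bound hr _ n (hR ω) hk hi)
  have hDint : ∀ k ∈ range n,
      Integrable (fun ω => drift r (fun j => X j ω) k * (X (k + 1) ω - X k ω)) μ := by
    intro k hk
    have hk := mem_range.1 hk
    simp only [mul_sub]
    exact (hDXint k hk.le (k + 1) hk).sub (hDXint k hk.le k hk.le)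
  have hD0 : ∫ ω, ∑ k ∈ range n, drift r (fun j => X j ω) k * (X (k + 1) ω - X k ω) ∂μ = 0 := by
    rw [integral_finsetSum _ hDint]
    refine sum_eq_zero fun k hk => integral_mul_increment hX k ?_ (hDint k hk)
    exact measurable_drift r fun j hj => (hX.stronglyMeasurable j).measurable.mono (ℱ.mono hj) le_rfl
  have hsum := integrable_finsetSum _ hDint
  calc ∫ ω, sqSum (fun j => X j ω) n ^ (r + 1) ∂μ
      ≤ ∫ ω, (4 * (r + 1) * (sqSum (fun j => X j ω) n ^ r * M ω ^ 2) - 2 * (r + 1) *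
          ∑ k ∈ range n, drift r (fun j => X j ω) k * (X (k + 1) ω - X k ω)) ∂μ :=
        integral_mono_of_nonneg
          (Filter.Eventually.of_forall fun ω => Real.rpow_nonneg (sqSum_nonneg _ _) _)
          ((hWint.const_mul _).sub (hsum.const_mul _))
          (Filter.Eventually.of_forall fun ω => sqSum_rpow_le hr _ n (hM ω))
    _ = 2 * (2 * (r + 1)) * ∫ ω, sqSum (fun j => X j ω) n ^ r * M ω ^ 2 ∂μ := by
        rw [integral_sub (hWint.const_mul _) (hsum.const_mul _), integral_const_mul,
          integral_const_mul, hD0]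
        ring
end

section
/- For every p ∈ (2,∞), every real-valued martingale (X_n)_{n≥1} (with X_0 = 0) such that E[|X_j|^p] < ∞ for j = 1,…,n, one has ((p−1)/p)^p·E[(X_n*)^p] ≤ (p(p−1)/2)·E[(X_n*)^{p−2}·S_n(X)^2]. -/
/-!
The inequality is the expectation of a pathwise one. For a real sequence `x` with `x 0 = 0`, let
`M k = max_{i ≤ k} |x i|` (`runMax`) and `c = p / (p - 1)`.

* A discrete integration by parts, together with Young's inequality, gives the pathwise form of
  Doob's `L^p` inequality (`doob_pathwise`):
  `M n ^ p ≤ c ^ p |x n| ^ p - c p ∑_{i<n} M i ^ (p-1) sgn (x i) (x (i+1) - x i)`.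
* On `[-m, m]` the function `t ↦ p (p-1) / 2 * m ^ (p-2) t ^ 2 - |t| ^ p` is convex; comparing it
  with its tangents (`abs_rpow_le_taylor`) and summing gives (`abs_rpow_pathwise`)
  `|x n| ^ p ≤ ∑_{i<n} p |x i| ^ (p-2) x i (x (i+1) - x i) + p (p-1) / 2 * M n ^ (p-2) S_n ^ 2`.

Together, `M n ^ p ≤ c ^ p p (p-1) / 2 * M n ^ (p-2) S_n ^ 2 + ∑_{i<n} G i (x (i+1) - x i)`,
where `G i` depends on `x 0, …, x i` only and `|G i| ≤ C M i ^ (p-1)`. Along a martingale bounded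
in `L^p` the last sum consists of integrable terms of mean zero (`integral_mul_increment`).
-/

open MeasureTheory Finset

/-! ### Elementary inequalities -/

/-- Young's inequality in tangent-line form: convexity of `s ↦ s ^ p`, with the tangent at `t`. -/
lemma young_tangent {p : ℝ} (hp : 1 < p) {s t : ℝ} (hs : 0 ≤ s) (ht : 0 ≤ t) :
    p * t ^ (p - 1) * s ≤ s ^ p + (p - 1) * t ^ p := by
  rcases ht.eq_or_lt with rfl | ht
  · rw [Real.zero_rpow (by linarith), Real.zero_rpow (by linarith)]
    have := Real.rpow_nonneg hs p
    nlinarith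
  · have hb := one_add_mul_self_le_rpow_one_add (s := s / t - 1)
      (by have := div_nonneg hs ht.le; linarith) hp.le
    rw [add_sub_cancel, Real.div_rpow hs ht.le, le_div_iff₀ (by positivity)] at hb
    have e : t ^ p = t ^ (p - 1) * t := by
      rw [← Real.rpow_add_one ht.ne']; congr 1; ring
    have e2 : (1 + p * (s / t - 1)) * t ^ p = t ^ p + p * t ^ (p - 1) * s - p * t ^ p := by
      rw [e]; field_simp; ring
    linarith

lemma rpow_sub_one_sub_le {p m s t : ℝ} (hp : 2 < p) (hs : 0 ≤ s) (hst : s ≤ t) (ht : t ≤ m) :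
    t ^ (p - 2) * t - s ^ (p - 2) * s ≤ (p - 1) * m ^ (p - 2) * (t - s) := by
  have h := young_tangent (p := p - 1) (by linarith) hs (hs.trans hst)
  have e : ∀ u : ℝ, 0 ≤ u → u ^ (p - 1) = u ^ (p - 2) * u := fun u hu => by
    rw [← Real.rpow_add_one' hu (by linarith)]; congr 1; ring
  rw [e s hs, e t (hs.trans hst), show p - 1 - 1 = p - 2 by ring] at h
  have hm : t ^ (p - 2) ≤ m ^ (p - 2) :=
    Real.rpow_le_rpow (hs.trans hst) ht (by linarith)
  have := mul_le_mul_of_nonneg_right hm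
    (mul_nonneg (by linarith : (0 : ℝ) ≤ p - 1) (sub_nonneg.2 hst))
  nlinarith

/-- The derivative of `t ↦ |t| ^ p / p` is `(p - 1) m ^ (p - 2)`-Lipschitz on `[-m, m]`. -/
lemma abs_rpow_mul_sub_le {p m s t : ℝ} (hp : 2 < p) (hs : |s| ≤ m) (hst : s ≤ t) (ht : |t| ≤ m) :
    |t| ^ (p - 2) * t - |s| ^ (p - 2) * s ≤ (p - 1) * m ^ (p - 2) * (t - s) := by
  have h0 : (0 : ℝ) ^ (p - 2) * 0 = 0 := mul_zero _
  rcases le_total 0 s with h | h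
  · rw [abs_of_nonneg h, abs_of_nonneg (h.trans hst)] at *
    exact rpow_sub_one_sub_le hp h hst ht
  · rcases le_total 0 t with h' | h'
    · rw [abs_of_nonneg h'] at *
      rw [abs_of_nonpos h] at *
      have h1 := rpow_sub_one_sub_le hp le_rfl h' ht
      have h2 := rpow_sub_one_sub_le hp le_rfl (neg_nonneg.2 h) hs
      linarith
    · rw [abs_of_nonpos h'] at *
      rw [abs_of_nonpos h] at *
      have := rpow_sub_one_sub_le hp (neg_nonneg.2 h') (neg_le_neg hst) hs
      linarith

/-- Second-order Taylor bound for `t ↦ |t| ^ p` on `[-m, m]`. -/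
lemma abs_rpow_le_taylor {p m x y : ℝ} (hp : 2 < p) (hx : |x| ≤ m) (hy : |y| ≤ m) :
    |y| ^ p ≤ |x| ^ p + p * |x| ^ (p - 2) * x * (y - x)
      + p * (p - 1) / 2 * m ^ (p - 2) * (y - x) ^ 2 := by
  let C := p * (p - 1) * m ^ (p - 2)
  let h : ℝ → ℝ := fun t => C / 2 * t ^ 2 - |t| ^ p
  let h' : ℝ → ℝ := fun t => C * t - p * |t| ^ (p - 2) * t
  have hd : ∀ t, HasDerivAt h (h' t) t := fun t => by
    have h1 := ((hasDerivAt_pow 2 t).const_mul (C / 2)).sub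
      (hasDerivAt_abs_rpow t (by linarith : 1 < p))
    refine h1.congr_deriv ?_
    simp only [h']; push_cast; ring
  have hmono : ∀ s t, |s| ≤ m → |t| ≤ m → s ≤ t → h' s ≤ h' t := fun s t hs ht hst => by
    have := mul_le_mul_of_nonneg_left (abs_rpow_mul_sub_le hp hs hst ht) (by linarith : 0 ≤ p)
    simp only [h', C]; nlinarith
  have key : h x + h' x * (y - x) ≤ h y := by
    have hc : Continuous h := continuous_iff_continuousAt.2 fun t => (hd t).continuousAt
    rcases lt_trichotomy x y with hxy | rfl | hxy
    · obtain ⟨z, hz, e⟩ := exists_hasDerivAt_eq_slope h h' hxy hc.continuousOn fun t _ => hd t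
      have hzm : |z| ≤ m := abs_le.2
        ⟨(abs_le.1 hx).1.trans hz.1.le, hz.2.le.trans (abs_le.1 hy).2⟩
      have := hmono x z hx hzm hz.1.le
      rw [e, le_div_iff₀ (by linarith)] at this
      linarith
    · simp
    · obtain ⟨z, hz, e⟩ := exists_hasDerivAt_eq_slope h h' hxy hc.continuousOn fun t _ => hd t
      have hzm : |z| ≤ m := abs_le.2
        ⟨(abs_le.1 hy).1.trans hz.1.le, hz.2.le.trans (abs_le.1 hx).2⟩
      have := hmono z x hzm hx hz.2.le
      rw [e, div_le_iff₀ (by linarith)] at this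
      linarith
  simp only [h, h', C] at key
  nlinarith

/-! ### Pathwise inequalities -/

/-- The running maximum `max_{i ≤ k} |x i|` of a real sequence. The value at `k = 0` is set to
`0`, which is `|x 0|` for the sequences started at `0` considered here. -/
def runMax (x : ℕ → ℝ) : ℕ → ℝ
  | 0 => 0
  | k + 1 => max (runMax x k) |x (k + 1)|

lemma runMax_nonneg (x : ℕ → ℝ) (k : ℕ) : 0 ≤ runMax x k := by
  induction k with
  | zero => exact le_rfl
  | succ k ih => exact ih.trans (le_max_left _ _)

lemma runMax_mono (x : ℕ → ℝ) : Monotone (runMax x) :=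
  monotone_nat_of_le_succ fun _ => le_max_left _ _

lemma abs_le_runMax {x : ℕ → ℝ} (hx : x 0 = 0) (k : ℕ) : |x k| ≤ runMax x k := by
  cases k with
  | zero => simp [hx, runMax]
  | succ k => exact le_max_right _ _

lemma runMax_le {x : ℕ → ℝ} {a : ℝ} (ha : 0 ≤ a) {n : ℕ}
    (h : ∀ j ∈ Finset.Icc 1 n, |x j| ≤ a) : runMax x n ≤ a := by
  induction n with
  | zero => exact ha
  | succ n ih =>
    refine max_le (ih fun j hj => h j ?_) (h _ (by simp))
    simp only [Finset.mem_Icc] at *; omega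

lemma iSup_eq_runMax {x : ℕ → ℝ} (hx : x 0 = 0) (n : ℕ) :
    ⨆ j ∈ Finset.Icc 1 n, |x j| = runMax x n := by
  have hle : ∀ j, ⨆ (_ : j ∈ Finset.Icc 1 n), |x j| ≤ runMax x n := fun j =>
    Real.iSup_le (fun hj => (abs_le_runMax hx j).trans
      (runMax_mono x (Finset.mem_Icc.1 hj).2)) (runMax_nonneg x n)
  refine le_antisymm (Real.iSup_le hle (runMax_nonneg x n)) (runMax_le ?_ fun j hj => ?_)
  · exact Real.iSup_nonneg fun j => Real.iSup_nonneg fun _ => abs_nonneg _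
  · have : |x j| = ⨆ (_ : j ∈ Finset.Icc 1 n), |x j| := by
      have : Nonempty (j ∈ Finset.Icc 1 n) := ⟨hj⟩
      exact ciSup_const.symm
    rw [this]
    exact le_ciSup (f := fun j => ⨆ (_ : j ∈ Finset.Icc 1 n), |x j|)
      ⟨runMax x n, by rintro _ ⟨j, rfl⟩; exact hle j⟩ j

/-- Discrete integration by parts. It is used that `runMax` increases only at times where it
equals `|x|`; `x i / |x i|` is the sign of `x i`, with value `0` at `0`. -/
lemma runMax_by_parts {p : ℝ} (hp : 1 < p) {x : ℕ → ℝ} (hx : x 0 = 0) (n : ℕ) :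
    (p - 1) * runMax x n ^ p ≤ p * runMax x n ^ (p - 1) * |x n|
      - p * ∑ i ∈ range n, runMax x i ^ (p - 1) * (x i / |x i|) * (x (i + 1) - x i) := by
  induction n with
  | zero => simp [runMax, hx, Real.zero_rpow (by linarith : p ≠ 0)]
  | succ n ih =>
    rw [sum_range_succ]
    set M := runMax x n
    have hM : 0 ≤ M := runMax_nonneg x n
    have hMp : 0 ≤ M ^ (p - 1) := Real.rpow_nonneg hM _
    have hsgn : x n / |x n| * (x (n + 1) - x n) ≤ |x (n + 1)| - |x n| := by
      rcases lt_trichotomy (x n) 0 with h | h | h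
      · rw [abs_of_neg h, div_neg, div_self h.ne]
        linarith [neg_le_abs (x (n + 1))]
      · simp [h]
      · rw [abs_of_pos h, div_self h.ne']
        linarith [le_abs_self (x (n + 1))]
    have h1 := mul_le_mul_of_nonneg_left hsgn (mul_nonneg (by linarith : 0 ≤ p) hMp)
    rcases le_total |x (n + 1)| M with h | h
    · have e : runMax x (n + 1) = M := max_eq_left h
      rw [e]; nlinarith
    · have e : runMax x (n + 1) = |x (n + 1)| := max_eq_right h
      have h2 := young_tangent hp (abs_nonneg (x (n + 1))) hM
      have e2 : |x (n + 1)| ^ p = |x (n + 1)| ^ (p - 1) * |x (n + 1)| := by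
        rw [← Real.rpow_add_one' (abs_nonneg _) (by linarith)]; congr 1; ring
      rw [e]; nlinarith

/-- Pathwise form of Doob's `L^p` maximal inequality. -/
lemma doob_pathwise {p : ℝ} (hp : 1 < p) {x : ℕ → ℝ} (hx : x 0 = 0) (n : ℕ) :
    runMax x n ^ p ≤ (p / (p - 1)) ^ p * |x n| ^ p - p / (p - 1) * p *
      ∑ i ∈ range n, runMax x i ^ (p - 1) * (x i / |x i|) * (x (i + 1) - x i) := by
  have hc : 0 < p / (p - 1) := div_pos (by linarith) (by linarith)
  have h1 := mul_le_mul_of_nonneg_left (runMax_by_parts hp hx n) hc.le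
  have h2 := young_tangent hp (mul_nonneg hc.le (abs_nonneg (x n))) (runMax_nonneg x n)
  rw [Real.mul_rpow hc.le (abs_nonneg _)] at h2
  have h3 : p / (p - 1) * ((p - 1) * runMax x n ^ p) = p * runMax x n ^ p := by
    rw [← mul_assoc, div_mul_cancel₀ _ (by linarith)]
  nlinarith

lemma abs_rpow_pathwise {p : ℝ} (hp : 2 < p) {x : ℕ → ℝ} (hx : x 0 = 0) (n : ℕ) :
    |x n| ^ p ≤ ∑ i ∈ range n, p * |x i| ^ (p - 2) * x i * (x (i + 1) - x i)
      + p * (p - 1) / 2 * (runMax x n ^ (p - 2) * ∑ i ∈ range n, (x (i + 1) - x i) ^ 2) := by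
  have key : ∀ k ≤ n, |x k| ^ p ≤ ∑ i ∈ range k, p * |x i| ^ (p - 2) * x i * (x (i + 1) - x i)
      + p * (p - 1) / 2 * (runMax x n ^ (p - 2) * ∑ i ∈ range k, (x (i + 1) - x i) ^ 2) := by
    intro k hk
    induction k with
    | zero => simp [hx, Real.zero_rpow (by linarith : p ≠ 0)]
    | succ k ih =>
      have h1 := abs_rpow_le_taylor hp
        ((abs_le_runMax hx k).trans (runMax_mono x (by omega : k ≤ n)))
        ((abs_le_runMax hx (k + 1)).trans (runMax_mono x hk))
      have h2 := ih (by omega)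
      rw [sum_range_succ, sum_range_succ]
      linarith
  exact key n le_rfl

/-- The coefficient of the increment `x (i+1) - x i` in `combined_pathwise`; it depends on
`x 0, …, x i` only. -/
noncomputable def coef (p : ℝ) (x : ℕ → ℝ) (i : ℕ) : ℝ :=
  (p / (p - 1)) ^ p * (p * |x i| ^ (p - 2) * x i)
    - p / (p - 1) * p * (runMax x i ^ (p - 1) * (x i / |x i|))

lemma combined_pathwise {p : ℝ} (hp : 2 < p) {x : ℕ → ℝ} (hx : x 0 = 0) (n : ℕ) :
    runMax x n ^ p ≤ (p / (p - 1)) ^ p * (p * (p - 1) / 2) *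
      (runMax x n ^ (p - 2) * ∑ i ∈ range n, (x (i + 1) - x i) ^ 2)
      + ∑ i ∈ range n, coef p x i * (x (i + 1) - x i) := by
  have hc : 0 ≤ (p / (p - 1)) ^ p :=
    Real.rpow_nonneg (div_nonneg (by linarith) (by linarith)) _
  have h1 := doob_pathwise (by linarith : 1 < p) hx n
  have h2 := mul_le_mul_of_nonneg_left (abs_rpow_pathwise hp hx n) hc
  have e : ∑ i ∈ range n, coef p x i * (x (i + 1) - x i) =
      (p / (p - 1)) ^ p * ∑ i ∈ range n, p * |x i| ^ (p - 2) * x i * (x (i + 1) - x i)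
      - p / (p - 1) * p *
        ∑ i ∈ range n, runMax x i ^ (p - 1) * (x i / |x i|) * (x (i + 1) - x i) := by
    rw [mul_sum, mul_sum, ← sum_sub_distrib]
    exact sum_congr rfl fun i _ => by simp only [coef]; ring
  rw [e]; linarith

lemma abs_coef_le {p : ℝ} (hp : 2 < p) {x : ℕ → ℝ} (hx : x 0 = 0) (i : ℕ) :
    |coef p x i| ≤ ((p / (p - 1)) ^ p * p + p / (p - 1) * p) * runMax x i ^ (p - 1) := by
  have hc : 0 < p / (p - 1) := div_pos (by linarith) (by linarith)
  have hcp : 0 < (p / (p - 1)) ^ p := Real.rpow_pos_of_pos hc _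
  have hM : 0 ≤ runMax x i ^ (p - 1) := Real.rpow_nonneg (runMax_nonneg x i) _
  have h1 : |(p / (p - 1)) ^ p * (p * |x i| ^ (p - 2) * x i)|
      ≤ (p / (p - 1)) ^ p * p * runMax x i ^ (p - 1) := by
    have e : |x i| ^ (p - 1) = |x i| ^ (p - 2) * |x i| := by
      rw [← Real.rpow_add_one' (abs_nonneg _) (by linarith)]; congr 1; ring
    have hle := Real.rpow_le_rpow (abs_nonneg _) (abs_le_runMax hx i)
      (by linarith : 0 ≤ p - 1)
    rw [abs_mul, abs_mul, abs_mul, abs_of_pos hcp, abs_of_pos (by linarith : 0 < p),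
      abs_of_nonneg (Real.rpow_nonneg (abs_nonneg (x i)) (p - 2)), mul_assoc p, ← e, ← mul_assoc]
    gcongr
  have h2 : |p / (p - 1) * p * (runMax x i ^ (p - 1) * (x i / |x i|))|
      ≤ p / (p - 1) * p * runMax x i ^ (p - 1) := by
    have hs : |(x i / |x i|)| ≤ 1 := by
      rw [abs_div, abs_abs]; exact div_self_le_one _
    rw [abs_mul, abs_mul (runMax x i ^ (p - 1)), abs_of_nonneg hM,
      abs_of_nonneg (mul_nonneg hc.le (by linarith) : 0 ≤ p / (p - 1) * p)]
    exact mul_le_mul_of_nonneg_left (mul_le_of_le_one_right hM hs)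
      (mul_nonneg hc.le (by linarith))
  have := abs_sub ((p / (p - 1)) ^ p * (p * |x i| ^ (p - 2) * x i))
    (p / (p - 1) * p * (runMax x i ^ (p - 1) * (x i / |x i|)))
  unfold coef
  linarith

lemma abs_increment_le {x : ℕ → ℝ} (hx : x 0 = 0) {i n : ℕ} (hi : i < n) :
    |x (i + 1) - x i| ≤ 2 * runMax x n := by
  have h1 := (abs_le_runMax hx (i + 1)).trans (runMax_mono x (by omega : i + 1 ≤ n))
  have h2 := (abs_le_runMax hx i).trans (runMax_mono x (by omega : i ≤ n))
  linarith [abs_sub (x (i + 1)) (x i)]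

/-! ### Measurability, integrability and orthogonality of increments -/

lemma measurable_runMax {Ω : Type*} {m0 : MeasurableSpace Ω} {ℱ : Filtration ℕ m0}
    {X : ℕ → Ω → ℝ} (hX : ∀ i, Measurable[ℱ i] (X i)) (k : ℕ) :
    Measurable[ℱ k] fun ω => runMax (fun i => X i ω) k := by
  induction k with
  | zero => exact measurable_const
  | succ k ih =>
    have h : Measurable[ℱ (k + 1)] fun ω => |X (k + 1) ω| :=
      continuous_abs.measurable.comp (hX (k + 1))
    exact (ih.mono (ℱ.mono (Nat.le_succ k)) le_rfl).max h

lemma measurable_coef {Ω : Type*} {m0 : MeasurableSpace Ω} {ℱ : Filtration ℕ m0}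
    {X : ℕ → Ω → ℝ} (hX : ∀ i, Measurable[ℱ i] (X i)) (p : ℝ) (i : ℕ) :
    Measurable[ℱ i] fun ω => coef p (fun j => X j ω) i := by
  have h1 := hX i
  have h2 := measurable_runMax hX i
  have h3 : Measurable[ℱ i] fun ω => |X i ω| := continuous_abs.measurable.comp h1
  unfold coef
  exact ((((h3.pow_const _).const_mul _).mul h1).const_mul _).sub
    (((h2.pow_const _).mul (h1.div h3)).const_mul _)

lemma integrable_runMax_rpow {Ω : Type*} {m0 : MeasurableSpace Ω} {μ : Measure Ω}
    {X : ℕ → Ω → ℝ} {p : ℝ} (hp : 0 < p) {n : ℕ}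
    (hm : ∀ k, Measurable fun ω => runMax (fun i => X i ω) k)
    (hint : ∀ j, 1 ≤ j → j ≤ n → Integrable (fun ω => |X j ω| ^ p) μ) :
    Integrable (fun ω => runMax (fun i => X i ω) n ^ p) μ := by
  induction n with
  | zero => simp [runMax, Real.zero_rpow hp.ne']
  | succ n ih =>
    refine ((ih fun j h1 h2 => hint j h1 (by omega)).add (hint (n + 1) (by omega) le_rfl)).mono'
      ((hm _).pow_const _).aestronglyMeasurable (Filter.Eventually.of_forall fun ω => ?_)
    have h0 := runMax_nonneg (fun i => X i ω) n
    rw [Real.norm_of_nonneg (Real.rpow_nonneg (runMax_nonneg _ _) _)]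
    simp only [runMax, Pi.add_apply]
    rcases max_cases (runMax (fun i => X i ω) n) |X (n + 1) ω| with h | h <;> rw [h.1]
    · linarith [Real.rpow_nonneg (abs_nonneg (X (n + 1) ω)) p]
    · linarith [Real.rpow_nonneg h0 p]

/-- Martingale increments are orthogonal to predictable factors. -/
lemma integral_mul_increment {Ω : Type*} {m0 : MeasurableSpace Ω} {μ : Measure Ω}
    [IsProbabilityMeasure μ] {ℱ : Filtration ℕ m0} {X : ℕ → Ω → ℝ} (hX : Martingale X ℱ μ)
    {i : ℕ} {g : Ω → ℝ} (hg : StronglyMeasurable[ℱ i] g)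
    (hint : Integrable (fun ω => g ω * (X (i + 1) ω - X i ω)) μ) :
    ∫ ω, g ω * (X (i + 1) ω - X i ω) ∂μ = 0 := by
  change Integrable (g * (X (i + 1) - X i)) μ at hint
  have hd : Integrable (X (i + 1) - X i) μ := (hX.integrable _).sub (hX.integrable _)
  have h0 : μ[X (i + 1) - X i | ℱ i] =ᵐ[μ] 0 := by
    filter_upwards [condExp_sub (hX.integrable (i + 1)) (hX.integrable i) (ℱ i),
      hX.condExp_ae_eq (Nat.le_succ i), hX.condExp_ae_eq (le_refl i)] with ω h1 h2 h3
    rw [h1, Pi.sub_apply, h2, h3, sub_self, Pi.zero_apply]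
  have h1 : μ[g * (X (i + 1) - X i) | ℱ i] =ᵐ[μ] 0 := by
    filter_upwards [condExp_mul_of_stronglyMeasurable_left hg hint hd, h0] with ω h1 h2
    rw [h1, Pi.mul_apply, h2, Pi.zero_apply, mul_zero]
  have h2 := integral_condExp (μ := μ) (f := g * (X (i + 1) - X i)) (ℱ.le i)
  rw [integral_congr_ae h1] at h2
  simpa using h2.symm

/-- For every `p ∈ (2,∞)` and every real-valued martingale `(X_n)` with `X_0 = 0`
such that `E[|X_j|^p] < ∞` for `j = 1,…,n`, one has
`((p−1)/p)^p·E[(X_n*)^p] ≤ (p(p−1)/2)·E[(X_n*)^{p−2}·S_n(X)^2]`. -/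
theorem maximal_function_vs_square_function (p : ℝ) (hp : 2 < p)
    {Ω : Type*} {m0 : MeasurableSpace Ω} {μ : Measure Ω} [IsProbabilityMeasure μ]
    (ℱ : Filtration ℕ m0) (X : ℕ → Ω → ℝ) (hX : Martingale X ℱ μ) (hX0 : X 0 = 0)
    (n : ℕ) (hn : 1 ≤ n)
    (hint : ∀ j, 1 ≤ j → j ≤ n → Integrable (fun ω => |X j ω| ^ p) μ) :
    ((p - 1) / p) ^ p * ∫ ω, (⨆ j ∈ Finset.Icc 1 n, |X j ω|) ^ p ∂μ ≤
      (p * (p - 1) / 2) * ∫ ω, (⨆ j ∈ Finset.Icc 1 n, |X j ω|) ^ (p - 2) *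
        ((∑ j ∈ Finset.Icc 1 n, (X j ω - X (j - 1) ω) ^ 2) ^ (1 / 2 : ℝ)) ^ 2 ∂μ := by
  have hp0 : 0 < p := by linarith
  have hx : ∀ ω, (fun j => X j ω) 0 = 0 := fun ω => by simp [hX0]
  have hS : ∀ ω, ((∑ j ∈ Finset.Icc 1 n, (X j ω - X (j - 1) ω) ^ 2) ^ (1 / 2 : ℝ)) ^ 2
      = ∑ i ∈ range n, (X (i + 1) ω - X i ω) ^ 2 := fun ω => by
    rw [← Real.sqrt_eq_rpow, Real.sq_sqrt (sum_nonneg fun _ _ => sq_nonneg _),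
      ← Finset.Ico_add_one_right_eq_Icc, sum_Ico_eq_sum_range]
    simp [add_comm]
  have hsup : ∀ ω, ⨆ j ∈ Finset.Icc 1 n, |X j ω| = runMax (fun j => X j ω) n :=
    fun ω => iSup_eq_runMax (hx ω) n
  simp only [hS, hsup]
  have hXm : ∀ i, Measurable[ℱ i] (X i) := fun i => (hX.stronglyMeasurable i).measurable
  have hXm' : ∀ i, Measurable (X i) := fun i => (hXm i).mono (ℱ.le i) le_rfl
  have hMm : ∀ k, Measurable fun ω => runMax (fun i => X i ω) k :=
    fun k => (measurable_runMax hXm k).mono (ℱ.le k) le_rfl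
  have hMint := integrable_runMax_rpow hp0 hMm hint
  -- Both integrands below are dominated by multiples of `M ^ p`: each increment is at most `2 M`.
  have hQint : Integrable (fun ω => runMax (fun j => X j ω) n ^ (p - 2) *
      ∑ i ∈ range n, (X (i + 1) ω - X i ω) ^ 2) μ := by
    refine (hMint.const_mul (4 * n)).mono' (((hMm n).pow_const _).mul
      (Finset.measurable_fun_sum _ fun i _ =>
        ((hXm' (i + 1)).sub (hXm' i)).pow_const 2)).aestronglyMeasurable
      (Filter.Eventually.of_forall fun ω => ?_)
    have h0 := runMax_nonneg (fun i => X i ω) n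
    have hM2 := Real.rpow_nonneg h0 (p - 2)
    rw [Real.norm_of_nonneg (mul_nonneg hM2 (sum_nonneg fun _ _ => sq_nonneg _))]
    have hs : ∑ i ∈ range n, (X (i + 1) ω - X i ω) ^ 2
        ≤ n * (4 * runMax (fun i => X i ω) n ^ 2) := by
      have := sum_le_card_nsmul (range n) (fun i => (X (i + 1) ω - X i ω) ^ 2)
        (4 * runMax (fun i => X i ω) n ^ 2) fun i hi => by
          have := sq_le_sq.2 ((abs_increment_le (x := fun j => X j ω) (hx ω) (mem_range.1 hi)).trans (le_abs_self _))
          linarith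
      simpa using this
    have e : runMax (fun i => X i ω) n ^ p
        = runMax (fun i => X i ω) n ^ (p - 2) * runMax (fun i => X i ω) n ^ 2 := by
      rw [← Real.rpow_natCast, ← Real.rpow_add' h0 (by push_cast; linarith)]
      congr 1; push_cast; ring
    rw [e]
    nlinarith [mul_le_mul_of_nonneg_left hs hM2]
  have hGint : ∀ i ∈ range n, Integrable
      (fun ω => coef p (fun j => X j ω) i * (X (i + 1) ω - X i ω)) μ := fun i hi => by
    refine (hMint.const_mul (((p / (p - 1)) ^ p * p + p / (p - 1) * p) * 2)).mono'
      (((measurable_coef hXm p i).mono (ℱ.le i) le_rfl).mul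
        ((hXm' (i + 1)).sub (hXm' i))).aestronglyMeasurable
      (Filter.Eventually.of_forall fun ω => ?_)
    have h0 := runMax_nonneg (fun i => X i ω) n
    have hc : 0 < p / (p - 1) := div_pos (by linarith) (by linarith)
    have e : runMax (fun i => X i ω) n ^ p
        = runMax (fun i => X i ω) n ^ (p - 1) * runMax (fun i => X i ω) n := by
      rw [← Real.rpow_add_one' h0 (by linarith)]; congr 1; ring
    have h1 : |coef p (fun j => X j ω) i| ≤ ((p / (p - 1)) ^ p * p + p / (p - 1) * p)
        * runMax (fun i => X i ω) n ^ (p - 1) := by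
      refine (abs_coef_le hp (hx ω) i).trans (mul_le_mul_of_nonneg_left ?_ (by positivity))
      exact Real.rpow_le_rpow (runMax_nonneg _ _) (runMax_mono _ (mem_range.1 hi).le)
        (by linarith)
    rw [Real.norm_eq_abs, abs_mul]
    refine (mul_le_mul h1 (abs_increment_le (x := fun j => X j ω) (hx ω) (mem_range.1 hi)) (abs_nonneg _)
      ((abs_nonneg _).trans h1)).trans_eq ?_
    rw [e]; ring
  have hmain : ∫ ω, runMax (fun j => X j ω) n ^ p ∂μ ≤
      (p / (p - 1)) ^ p * (p * (p - 1) / 2) * ∫ ω, runMax (fun j => X j ω) n ^ (p - 2) *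
        ∑ i ∈ range n, (X (i + 1) ω - X i ω) ^ 2 ∂μ := by
    refine (integral_mono hMint ((hQint.const_mul _).add (integrable_finsetSum _ hGint))
      fun ω => combined_pathwise hp (hx ω) n).trans_eq ?_
    simp only [Pi.add_apply]
    rw [integral_add (hQint.const_mul _) (integrable_finsetSum _ hGint), integral_const_mul,
      integral_finsetSum _ hGint, sum_eq_zero fun i hi => integral_mul_increment hX
        (measurable_coef hXm p i).stronglyMeasurable (hGint i hi), add_zero]
  have hcc : ((p - 1) / p) ^ p * (p / (p - 1)) ^ p = 1 := by
    have h1 : 0 < p - 1 := by linarith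
    rw [← Real.mul_rpow (by positivity) (by positivity), div_mul_div_cancel₀ hp0.ne',
      div_self h1.ne', Real.one_rpow]
  have h := mul_le_mul_of_nonneg_left hmain
    (Real.rpow_nonneg (div_nonneg (by linarith) hp0.le) p : 0 ≤ ((p - 1) / p) ^ p)
  rwa [← mul_assoc, ← mul_assoc, hcc, one_mul] at h
end

section
/- For every p ∈ (1,2), every real-valued martingale (X_n)_{n≥1} (with X_0 = 0) such that E[|X_j|^p] < ∞ for j = 1,…,n, one has E[|X_n|^p] ≥ (p(p−1)/2)·E[Σ_{j=1}^n (X_j − X_{j−1})^2·(max(|X_j|, |X_{j−1}|))^{p−2}], where a summand is interpreted as 0 when X_j = X_{j−1} = 0. -/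
/-!
The function `t ↦ |t| ^ p` has second derivative `p (p - 1) |t| ^ (p - 2)`, which on `[-M, M]` is at
least `p (p - 1) M ^ (p - 2)` because `p < 2`. Hence `|t| ^ p - (p (p - 1) / 2) M ^ (p - 2) t ^ 2` is
convex there, and its tangent inequality at `x`, with `M = max |y| |x|`, bounds the Bregman divergence
`|y| ^ p - |x| ^ p - p |x| ^ (p - 2) x (y - x)` below by `(p (p - 1) / 2) M ^ (p - 2) (y - x) ^ 2`
(`bregman_lower_bound`). Second derivatives are avoided, since they blow up at `0`: the first
derivative is shown to be monotone via Bernoulli's inequality (`phi_sub_linear_mono`).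

With `x = X (j - 1)` and `y = X j`, the first-order terms have mean zero by the martingale property
(`integral_phi_mul_increment`), so summing over `j` telescopes to the claim.
-/

open MeasureTheory Finset

/-- The slope bound for `t ↦ t ^ (p - 1)` on `[0, M]`, written with `|t| ^ (p - 2) * t` in place of
`t ^ (p - 1)`. -/
lemma phi_sub_linear_nonneg_mono {p : ℝ} (hp1 : 1 < p) (hp2 : p < 2) {M s t : ℝ}
    (hs : 0 ≤ s) (hst : s ≤ t) (ht : t ≤ M) :
    |s| ^ (p - 2) * s - (p - 1) * M ^ (p - 2) * s ≤
      |t| ^ (p - 2) * t - (p - 1) * M ^ (p - 2) * t := by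
  rcases hst.eq_or_lt with rfl | hlt
  · exact le_rfl
  have ht0 : 0 < t := hs.trans_lt hlt
  have hM : M ^ (p - 2) ≤ t ^ (p - 2) :=
    Real.rpow_le_rpow_of_nonpos ht0 ht (by linarith)
  have key : |s| ^ (p - 2) * s ≤ t ^ (p - 2) * t + (p - 1) * t ^ (p - 2) * (s - t) := by
    rcases hs.eq_or_lt with rfl | hs0
    · have : 0 ≤ t ^ (p - 2) * t * (2 - p) :=
        mul_nonneg (by positivity) (by linarith)
      simp only [mul_zero]
      nlinarith
    · -- Bernoulli's inequality for the exponent `p - 1 ∈ [0, 1]`, at `s / t`.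
      have hB := rpow_one_add_le_one_add_mul_self (s := s / t - 1) (p := p - 1)
        (by have : 0 < s / t := by positivity
            linarith) (by linarith) (by linarith)
      rw [add_sub_cancel, Real.div_rpow hs ht0.le, div_le_iff₀ (by positivity)] at hB
      have e1 : |s| ^ (p - 2) * s = s ^ (p - 1) := by
        rw [abs_of_pos hs0, ← Real.rpow_add_one hs0.ne']; ring_nf
      have e2 : t ^ (p - 1) = t ^ (p - 2) * t := by
        rw [← Real.rpow_add_one ht0.ne']; ring_nf
      rw [e1]
      refine hB.trans (le_of_eq ?_)
      rw [e2]
      field_simp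
  rw [abs_of_pos ht0]
  have := mul_nonneg (mul_nonneg (sub_nonneg.2 hp1.le) (sub_nonneg.2 hM)) (sub_nonneg.2 hst)
  nlinarith

/-- Up to the factor `p`, the derivative of `|t| ^ p - (p (p - 1) / 2) M ^ (p - 2) t ^ 2` is monotone
on `[-M, M]`. -/
lemma phi_sub_linear_mono {p : ℝ} (hp1 : 1 < p) (hp2 : p < 2) {M s t : ℝ}
    (hs : -M ≤ s) (hst : s ≤ t) (ht : t ≤ M) :
    |s| ^ (p - 2) * s - (p - 1) * M ^ (p - 2) * s ≤
      |t| ^ (p - 2) * t - (p - 1) * M ^ (p - 2) * t := by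
  -- The function is odd, so the bound on `[0, M]` suffices.
  rcases le_total 0 s with h0 | h0
  · exact phi_sub_linear_nonneg_mono hp1 hp2 h0 hst ht
  rcases le_total t 0 with h1 | h1
  · have := phi_sub_linear_nonneg_mono hp1 hp2 (M := M) (s := -t) (t := -s)
      (by linarith) (by linarith) (by linarith)
    simp only [abs_neg] at this
    linarith
  · have a := phi_sub_linear_nonneg_mono hp1 hp2 (M := M) (s := 0) (t := -s)
      le_rfl (by linarith) (by linarith)
    have b := phi_sub_linear_nonneg_mono hp1 hp2 (M := M) (s := 0) (t := t) le_rfl h1 ht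
    simp only [abs_neg, mul_zero] at a b
    linarith

/-- The quadratic lower bound for the Bregman divergence of `|·| ^ p`. At `x = y = 0` both sides
vanish. -/
lemma bregman_lower_bound {p : ℝ} (hp1 : 1 < p) (hp2 : p < 2) (x y : ℝ) :
    (p * (p - 1) / 2) * ((y - x) ^ 2 * (max |y| |x|) ^ (p - 2)) ≤
      |y| ^ p - |x| ^ p - p * (|x| ^ (p - 2) * x * (y - x)) := by
  set M := max |y| |x| with hM
  obtain ⟨hy1, hy2⟩ := abs_le.1 (le_max_left |y| |x|)
  obtain ⟨hx1, hx2⟩ := abs_le.1 (le_max_right |y| |x|)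
  rw [← hM] at hy1 hy2 hx1 hx2
  let g : ℝ → ℝ := fun t => |t| ^ (p - 2) * t - (p - 1) * M ^ (p - 2) * t
  let h : ℝ → ℝ := fun t => |t| ^ p - (p * (p - 1) / 2) * M ^ (p - 2) * t ^ 2
  have hd : ∀ t, HasDerivAt h (p * g t) t := fun t => by
    have := (hasDerivAt_abs_rpow t hp1).sub
      ((hasDerivAt_pow 2 t).const_mul ((p * (p - 1) / 2) * M ^ (p - 2)))
    have e : p * g t = p * |t| ^ (p - 2) * t -
        p * (p - 1) / 2 * M ^ (p - 2) * (((2 : ℕ) : ℝ) * t ^ (2 - 1)) := by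
      simp only [g]
      push_cast
      ring
    rw [e]
    exact this
  have tangent : h x + p * g x * (y - x) ≤ h y := by
    have hc : Continuous h := continuous_iff_continuousAt.2 fun t => (hd t).continuousAt
    rcases lt_trichotomy x y with hxy | rfl | hxy
    · obtain ⟨ξ, ⟨h1, h2⟩, he⟩ := exists_hasDerivAt_eq_slope h (fun t => p * g t) hxy
        hc.continuousOn fun t _ => hd t
      have hg : g x ≤ g ξ := phi_sub_linear_mono hp1 hp2 hx1 h1.le (h2.le.trans hy2)
      rw [eq_div_iff (by linarith)] at he
      have := mul_nonneg (mul_nonneg (by linarith : 0 ≤ p) (sub_nonneg.2 hg)) (sub_nonneg.2 hxy.le)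
      nlinarith
    · simp
    · obtain ⟨ξ, ⟨h1, h2⟩, he⟩ := exists_hasDerivAt_eq_slope h (fun t => p * g t) hxy
        hc.continuousOn fun t _ => hd t
      have hg : g ξ ≤ g x := phi_sub_linear_mono hp1 hp2 (hy1.trans h1.le) h2.le hx2
      rw [eq_div_iff (by linarith)] at he
      have := mul_nonneg (mul_nonneg (by linarith : 0 ≤ p) (sub_nonneg.2 hg)) (sub_nonneg.2 hxy.le)
      nlinarith
  simp only [h, g] at tangent
  linarith

/-- Dominates the first-order terms, so that they are integrable when `|x| ^ p` and `|y| ^ p` are. -/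
lemma abs_phi_mul_le {p : ℝ} (hp1 : 1 < p) (x y : ℝ) :
    |(|x| ^ (p - 2) * x) * y| ≤ |x| ^ p + |y| ^ p := by
  rcases eq_or_ne x 0 with rfl | hx
  · simp only [mul_zero, zero_mul, abs_zero]
    positivity
  have hx' : 0 < |x| := abs_pos.2 hx
  have e : |(|x| ^ (p - 2) * x) * y| = |x| ^ (p - 1) * |y| := by
    rw [abs_mul, abs_mul, abs_of_nonneg (by positivity : 0 ≤ |x| ^ (p - 2)),
      ← Real.rpow_add_one hx'.ne']
    ring_nf
  rw [e]
  rcases le_total |x| |y| with hxy | hxy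
  · have hy' := hx'.trans_le hxy
    have h1 : |x| ^ (p - 1) * |y| ≤ |y| ^ (p - 1) * |y| := by gcongr
    rw [← Real.rpow_add_one hy'.ne', sub_add_cancel] at h1
    have : 0 ≤ |x| ^ p := by positivity
    linarith
  · have h1 : |x| ^ (p - 1) * |y| ≤ |x| ^ (p - 1) * |x| := by gcongr
    rw [← Real.rpow_add_one hx'.ne', sub_add_cancel] at h1
    have : 0 ≤ |y| ^ p := by positivity
    linarith

lemma measurable_phi (p : ℝ) : Measurable fun x : ℝ => |x| ^ (p - 2) * x := by
  fun_prop

/-- The first-order term of the Bregman divergence along a martingale is integrable with mean zero. -/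
lemma integral_phi_mul_increment {p : ℝ} (hp1 : 1 < p)
    {Ω : Type*} {m0 : MeasurableSpace Ω} {μ : Measure Ω} [IsProbabilityMeasure μ]
    {ℱ : Filtration ℕ m0} {X : ℕ → Ω → ℝ} (hX : Martingale X ℱ μ) (k : ℕ)
    (h0 : Integrable (fun ω => |X k ω| ^ p) μ) (h1 : Integrable (fun ω => |X (k + 1) ω| ^ p) μ) :
    Integrable (fun ω => |X k ω| ^ (p - 2) * X k ω * (X (k + 1) ω - X k ω)) μ ∧
      ∫ ω, |X k ω| ^ (p - 2) * X k ω * (X (k + 1) ω - X k ω) ∂μ = 0 := by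
  have hphi : StronglyMeasurable[ℱ k] fun ω => |X k ω| ^ (p - 2) * X k ω :=
    ((measurable_phi p).comp (hX.stronglyMeasurable k).measurable).stronglyMeasurable
  have hI : ∀ j, Integrable (fun ω => |X j ω| ^ p) μ →
      Integrable (fun ω => |X k ω| ^ (p - 2) * X k ω * X j ω) μ := fun j hj =>
    (h0.add hj).mono' ((hphi.mono (ℱ.le k)).aestronglyMeasurable.mul
      (hX.integrable j).aestronglyMeasurable) (ae_of_all _ fun ω => abs_phi_mul_le hp1 _ _)
  have hprod : Integrable (fun ω => |X k ω| ^ (p - 2) * X k ω * X (k + 1) ω) μ := hI _ h1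
  have hself : Integrable (fun ω => |X k ω| ^ (p - 2) * X k ω * X k ω) μ := hI _ h0
  simp only [mul_sub]
  refine ⟨hprod.sub hself, ?_⟩
  rw [integral_sub hprod hself, sub_eq_zero, ← integral_condExp (ℱ.le k)]
  refine integral_congr_ae ?_
  have hpull := condExp_mul_of_stronglyMeasurable_left hphi hprod (hX.integrable (k + 1))
  filter_upwards [hpull, hX.condExp_ae_eq (Nat.le_succ k)] with ω e1 e2
  refine e1.trans ?_
  simp only [Pi.mul_apply]
  rw [e2]

/-- For every `p ∈ (1,2)` and every real-valued martingale `(X_n)` with `X_0 = 0`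
such that `E[|X_j|^p] < ∞` for `j = 1,…,n`, one has
`E[|X_n|^p] ≥ (p(p−1)/2)·E[∑_{j=1}^n (X_j − X_{j−1})^2·(max(|X_j|,|X_{j−1}|))^{p−2}]`.
(With real `rpow`, `0 ^ (p-2) = 0` since `p ≠ 2`, so a summand is `0` when
`X_j = X_{j−1} = 0`, matching the stated convention.) -/
theorem lower_bound_via_bregman (p : ℝ) (hp1 : 1 < p) (hp2 : p < 2)
    {Ω : Type*} {m0 : MeasurableSpace Ω} {μ : Measure Ω} [IsProbabilityMeasure μ]
    (ℱ : Filtration ℕ m0) (X : ℕ → Ω → ℝ) (hX : Martingale X ℱ μ) (hX0 : X 0 = 0)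
    (n : ℕ) (hn : 1 ≤ n)
    (hint : ∀ j, 1 ≤ j → j ≤ n → Integrable (fun ω => |X j ω| ^ p) μ) :
    (p * (p - 1) / 2) * ∫ ω, ∑ j ∈ Finset.Icc 1 n,
        (X j ω - X (j - 1) ω) ^ 2 * (max |X j ω| |X (j - 1) ω|) ^ (p - 2) ∂μ ≤
      ∫ ω, |X n ω| ^ p ∂μ := by
  have hint' : ∀ j, j ≤ n → Integrable (fun ω => |X j ω| ^ p) μ := by
    intro j hj
    rcases Nat.eq_zero_or_pos j with rfl | h
    · have hp0 : p ≠ 0 := by linarith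
      simp [hX0, Real.zero_rpow hp0]
    · exact hint j h hj
  have hmart : ∀ k ∈ Finset.range n, _ := fun k hk =>
    have hk := Finset.mem_range.1 hk
    integral_phi_mul_increment hp1 hX k (hint' k hk.le) (hint' (k + 1) hk)
  have hpt : ∀ ω, ∀ m, (p * (p - 1) / 2) * ∑ j ∈ Finset.Icc 1 m,
        (X j ω - X (j - 1) ω) ^ 2 * (max |X j ω| |X (j - 1) ω|) ^ (p - 2) ≤
      |X m ω| ^ p - p * ∑ k ∈ Finset.range m,
        |X k ω| ^ (p - 2) * X k ω * (X (k + 1) ω - X k ω) := by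
    intro ω m
    induction m with
    | zero =>
      have hp0 : p ≠ 0 := by linarith
      simp [hX0, Real.zero_rpow hp0]
    | succ m ih =>
      rw [Finset.sum_Icc_succ_top (by omega), Finset.sum_range_succ, mul_add, mul_add,
        Nat.add_sub_cancel]
      have := bregman_lower_bound hp1 hp2 (X m ω) (X (m + 1) ω)
      linarith
  have hsumI : Integrable (fun ω => p * ∑ k ∈ Finset.range n,
      |X k ω| ^ (p - 2) * X k ω * (X (k + 1) ω - X k ω)) μ :=
    (integrable_finsetSum _ fun k hk => (hmart k hk).1).const_mul p
  rw [← integral_const_mul]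
  -- Only the upper bound has to be integrable, as the left integrand is nonnegative.
  refine (integral_mono_of_nonneg (ae_of_all _ fun ω => ?_) ((hint' n le_rfl).sub hsumI)
    (ae_of_all _ fun ω => hpt ω n)).trans (le_of_eq ?_)
  · have : 0 ≤ p * (p - 1) / 2 := by nlinarith
    exact mul_nonneg this (Finset.sum_nonneg fun j _ => by positivity)
  · simp only [Pi.sub_apply]
    rw [integral_sub (hint' n le_rfl) hsumI, integral_const_mul,
      integral_finsetSum _ fun k hk => (hmart k hk).1,
      Finset.sum_eq_zero fun k hk => (hmart k hk).2, mul_zero, sub_zero]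
end

section
/- Let p ∈ (1,∞) and q = p/(p−1). Let (X_j)_{j=1}^n and (Z_j)_{j=1}^n be real-valued martingales with respect to the same filtration (F_j), with X_0 = Z_0 = 0, such that E[|X_j|^p] < ∞ and E[|Z_j|^q] < ∞ for j = 1,…,n. Then |E[X_n·Z_n]| ≤ (E[S_n(X)^p])^{1/p}·(E[S_n(Z)^q])^{1/q}. -/
open MeasureTheory Finset

/-!
Orthogonality reduces the expectation to increments: `X j` is `ℱ j`-measurable and the increment
of `Z` from `j` to `j + 1` has zero conditional expectation given `ℱ j`, and likewise with `X` and
`Z` exchanged, so the cross terms vanish and `E[X_n Z_n] = ∑ E[ΔX_j ΔZ_j]`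
(`integral_mul_eq_integral_sum_increments`). Pointwise, the Cauchy–Schwarz inequality bounds
`|∑ ΔX_j ΔZ_j|` by `S_n(X) S_n(Z)`, and Hölder's inequality finishes the proof. The square
functions lie in `L^p` and `L^q` because the `ℓ²` norm of the increments is at most their `ℓ¹`
norm (`memLp_squareFunction`).
-/

/-- The square function `S_n(Y)`, written with a real square root. -/
noncomputable def squareFunction {Ω : Type*} (Y : ℕ → Ω → ℝ) (n : ℕ) (ω : Ω) : ℝ :=
  √(∑ j ∈ Finset.Icc 1 n, (Y j ω - Y (j - 1) ω) ^ 2)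

lemma squareFunction_rpow {Ω : Type*} (Y : ℕ → Ω → ℝ) (n : ℕ) (ω : Ω) (r : ℝ) :
    squareFunction Y n ω ^ r = (∑ j ∈ Finset.Icc 1 n, (Y j ω - Y (j - 1) ω) ^ 2) ^ (r / 2) := by
  have h : 0 ≤ ∑ j ∈ Finset.Icc 1 n, (Y j ω - Y (j - 1) ω) ^ 2 :=
    Finset.sum_nonneg fun _ _ => sq_nonneg _
  rw [squareFunction, Real.sqrt_eq_rpow, ← Real.rpow_mul h]
  congr 1
  ring

lemma memLp_of_integrable_abs_rpow {Ω : Type*} {m0 : MeasurableSpace Ω} {μ : Measure Ω}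
    {r : ℝ} (hr : 0 < r) {Y : ℕ → Ω → ℝ} (hY : ∀ j, AEStronglyMeasurable (Y j) μ)
    (hY0 : Y 0 = 0) {n : ℕ} (hint : ∀ j, 1 ≤ j → j ≤ n → Integrable (fun ω => |Y j ω| ^ r) μ)
    (j : ℕ) (hj : j ≤ n) : MemLp (Y j) (ENNReal.ofReal r) μ := by
  rcases Nat.eq_zero_or_pos j with rfl | h
  · rw [hY0]
    exact MemLp.zero
  · rw [← integrable_norm_rpow_iff (hY j) (by simpa using hr) ENNReal.ofReal_ne_top,
      ENNReal.toReal_ofReal hr.le]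
    exact hint j h hj

lemma memLp_squareFunction {Ω : Type*} {m0 : MeasurableSpace Ω} {μ : Measure Ω}
    {r : ENNReal} {Y : ℕ → Ω → ℝ} {n : ℕ} (hY : ∀ j ≤ n, MemLp (Y j) r μ) :
    MemLp (squareFunction Y n) r μ := by
  have hd : ∀ j ∈ Finset.Icc 1 n, MemLp (fun ω => Y j ω - Y (j - 1) ω) r μ := fun j hj => by
    have := (Finset.mem_Icc.1 hj).2
    exact (hY j this).sub (hY (j - 1) (by omega))
  have hsum : MemLp (fun ω => ∑ j ∈ Finset.Icc 1 n, |Y j ω - Y (j - 1) ω|) r μ :=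
    memLp_finsetSum _ fun j hj => (hd j hj).abs
  refine hsum.mono ?_ (Filter.Eventually.of_forall fun ω => ?_)
  · refine Real.continuous_sqrt.comp_aestronglyMeasurable ?_
    exact Finset.aestronglyMeasurable_fun_sum _ fun j hj => (hd j hj).1.pow 2
  · have h0 : 0 ≤ ∑ j ∈ Finset.Icc 1 n, |Y j ω - Y (j - 1) ω| :=
      Finset.sum_nonneg fun _ _ => abs_nonneg _
    rw [squareFunction, Real.norm_of_nonneg (Real.sqrt_nonneg _), Real.norm_of_nonneg h0]
    refine Real.sqrt_le_iff.2 ⟨h0, ?_⟩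
    simpa only [sq_abs] using Finset.sum_sq_le_sq_sum_of_nonneg
      (s := Finset.Icc 1 n) (f := fun j => |Y j ω - Y (j - 1) ω|) fun _ _ => abs_nonneg _

/-- A martingale increment is orthogonal to every function that is measurable at its starting
time, as soon as the product is integrable. -/
lemma integral_mul_increment_eq_zero {Ω : Type*} {m0 : MeasurableSpace Ω} {μ : Measure Ω}
    [IsProbabilityMeasure μ] {ℱ : Filtration ℕ m0} {Z : ℕ → Ω → ℝ} (hZ : Martingale Z ℱ μ)
    {k : ℕ} {f : Ω → ℝ} (hf : StronglyMeasurable[ℱ k] f)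
    (hint : Integrable (fun ω => f ω * (Z (k + 1) ω - Z k ω)) μ) :
    ∫ ω, f ω * (Z (k + 1) ω - Z k ω) ∂μ = 0 := by
  have hd : Integrable (Z (k + 1) - Z k) μ := (hZ.integrable _).sub (hZ.integrable _)
  have hzero : μ[Z (k + 1) - Z k | ℱ k] =ᵐ[μ] 0 := by
    filter_upwards [condExp_sub (hZ.integrable (k + 1)) (hZ.integrable k) (ℱ k),
      hZ.condExp_ae_eq (Nat.le_succ k), hZ.condExp_ae_eq (le_refl k)] with ω h1 h2 h3
    rw [h1, Pi.sub_apply, h2, h3, sub_self, Pi.zero_apply]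
  have hpull : μ[f * (Z (k + 1) - Z k) | ℱ k] =ᵐ[μ] f * μ[Z (k + 1) - Z k | ℱ k] :=
    condExp_mul_of_stronglyMeasurable_left hf hint hd
  calc ∫ ω, f ω * (Z (k + 1) ω - Z k ω) ∂μ
      = ∫ ω, (μ[f * (Z (k + 1) - Z k) | ℱ k]) ω ∂μ := (integral_condExp (ℱ.le k)).symm
    _ = ∫ _, (0 : ℝ) ∂μ := by
        refine integral_congr_ae ?_
        filter_upwards [hpull, hzero] with ω h1 h2
        rw [h1, Pi.mul_apply, h2, Pi.zero_apply, mul_zero]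
    _ = 0 := integral_zero _ _

/-- Polarized form of `E[X_n²] = ∑ E[(ΔX_j)²]`: all cross terms vanish by orthogonality of the
increments. Only one of the two martingales has to start at `0`. -/
lemma integral_mul_eq_integral_sum_increments {Ω : Type*} {m0 : MeasurableSpace Ω}
    {μ : Measure Ω} [IsProbabilityMeasure μ] {ℱ : Filtration ℕ m0} {X Z : ℕ → Ω → ℝ}
    (hX : Martingale X ℱ μ) (hZ : Martingale Z ℱ μ) (hX0 : X 0 = 0) {n : ℕ}
    (hint : ∀ i ≤ n, ∀ j ≤ n, Integrable (fun ω => X i ω * Z j ω) μ) :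
    ∫ ω, X n ω * Z n ω ∂μ =
      ∫ ω, ∑ j ∈ Finset.Icc 1 n, (X j ω - X (j - 1) ω) * (Z j ω - Z (j - 1) ω) ∂μ := by
  have hincr : ∀ i ≤ n, ∀ j ≤ n, ∀ k ≤ n, ∀ l ≤ n,
      Integrable (fun ω => (X i ω - X j ω) * (Z k ω - Z l ω)) μ := by
    intro i hi j hj k hk l hl
    refine (((hint i hi k hk).sub (hint i hi l hl)).sub
      ((hint j hj k hk).sub (hint j hj l hl))).congr (Filter.Eventually.of_forall fun ω => ?_)
    simp only [Pi.sub_apply]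
    ring
  rw [integral_finsetSum _ fun j hj => by
    have := (Finset.mem_Icc.1 hj).2
    exact hincr _ this _ (by omega) _ this _ (by omega)]
  suffices h : ∀ m ≤ n, ∫ ω, X m ω * Z m ω ∂μ = ∑ j ∈ Finset.Icc 1 m,
      ∫ ω, (X j ω - X (j - 1) ω) * (Z j ω - Z (j - 1) ω) ∂μ from h n le_rfl
  intro m
  induction m with
  | zero => simp [hX0]
  | succ k ih =>
    intro hk
    have hk' : k ≤ n := by omega
    rw [Finset.sum_Icc_succ_top (by omega), ← ih hk', Nat.add_sub_cancel]
    have i1 : Integrable (fun ω => X k ω * (Z (k + 1) ω - Z k ω)) μ := by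
      simp only [mul_sub]
      exact (hint k hk' _ hk).sub (hint k hk' k hk')
    have i2 : Integrable (fun ω => Z k ω * (X (k + 1) ω - X k ω)) μ := by
      simp only [mul_comm (Z k _), sub_mul]
      exact (hint _ hk k hk').sub (hint k hk' k hk')
    have i3 := hincr _ hk _ hk' _ hk _ hk'
    have z1 := integral_mul_increment_eq_zero hZ (hX.stronglyAdapted k) i1
    have z2 := integral_mul_increment_eq_zero hX (hZ.stronglyAdapted k) i2
    have i4 : Integrable (fun ω => X k ω * (Z (k + 1) ω - Z k ω)
        + Z k ω * (X (k + 1) ω - X k ω)) μ := i1.add i2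
    have i5 : Integrable (fun ω => X k ω * Z k ω
        + (X (k + 1) ω - X k ω) * (Z (k + 1) ω - Z k ω)) μ := (hint k hk' k hk').add i3
    calc ∫ ω, X (k + 1) ω * Z (k + 1) ω ∂μ
        = ∫ ω, (X k ω * Z k ω + (X (k + 1) ω - X k ω) * (Z (k + 1) ω - Z k ω))
            + (X k ω * (Z (k + 1) ω - Z k ω) + Z k ω * (X (k + 1) ω - X k ω)) ∂μ := by
          congr 1
          ext ω
          ring
      _ = _ := by
          rw [integral_add i5 i4, integral_add (hint k hk' k hk') i3, integral_add i1 i2, z1, z2]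
          ring

/-- Let `p ∈ (1,∞)` and `q = p/(p−1)`. For martingales `(X_j)` and `(Z_j)` with respect to
the same filtration, with `X_0 = Z_0 = 0`, such that `E[|X_j|^p] < ∞` and `E[|Z_j|^q] < ∞`
for `j = 1,…,n`, one has `|E[X_n·Z_n]| ≤ (E[S_n(X)^p])^{1/p}·(E[S_n(Z)^q])^{1/q}`. -/
theorem abs_expectation_product_le_holder (p q : ℝ) (hp : 1 < p) (hq : q = p / (p - 1))
    {Ω : Type*} {m0 : MeasurableSpace Ω} {μ : Measure Ω} [IsProbabilityMeasure μ]
    (ℱ : Filtration ℕ m0) (X Z : ℕ → Ω → ℝ)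
    (hX : Martingale X ℱ μ) (hZ : Martingale Z ℱ μ) (hX0 : X 0 = 0) (hZ0 : Z 0 = 0)
    (n : ℕ) (hn : 1 ≤ n)
    (hintX : ∀ j, 1 ≤ j → j ≤ n → Integrable (fun ω => |X j ω| ^ p) μ)
    (hintZ : ∀ j, 1 ≤ j → j ≤ n → Integrable (fun ω => |Z j ω| ^ q) μ) :
    |∫ ω, X n ω * Z n ω ∂μ| ≤
      (∫ ω, (∑ j ∈ Finset.Icc 1 n, (X j ω - X (j - 1) ω) ^ 2) ^ (p / 2) ∂μ) ^ (1 / p) *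
      (∫ ω, (∑ j ∈ Finset.Icc 1 n, (Z j ω - Z (j - 1) ω) ^ 2) ^ (q / 2) ∂μ) ^ (1 / q) := by
  have hpq : p.HolderConjugate q := (Real.holderConjugate_iff_eq_conjExponent hp).2 hq
  have hXm := memLp_of_integrable_abs_rpow hpq.pos (fun j => (hX.integrable j).1) hX0 hintX
  have hZm := memLp_of_integrable_abs_rpow hpq.symm.pos (fun j => (hZ.integrable j).1) hZ0 hintZ
  have : (ENNReal.ofReal p).HolderConjugate (ENNReal.ofReal q) := hpq.ennrealOfReal
  have hSX := memLp_squareFunction hXm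
  have hSZ := memLp_squareFunction hZm
  rw [integral_mul_eq_integral_sum_increments hX hZ hX0
    fun i hi j hj => (hXm i hi).integrable_mul (hZm j hj)]
  simp only [← squareFunction_rpow]
  calc |∫ ω, ∑ j ∈ Finset.Icc 1 n, (X j ω - X (j - 1) ω) * (Z j ω - Z (j - 1) ω) ∂μ|
      ≤ ∫ ω, squareFunction X n ω * squareFunction Z n ω ∂μ := by
        rw [← Real.norm_eq_abs]
        refine norm_integral_le_of_norm_le (hSX.integrable_mul hSZ)
          (Filter.Eventually.of_forall fun ω => ?_)
        rw [Real.norm_eq_abs, squareFunction, squareFunction,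
          ← Real.sqrt_mul (Finset.sum_nonneg fun _ _ => sq_nonneg _)]
        exact Real.abs_le_sqrt (Finset.sum_mul_sq_le_sq_mul_sq _ _ _)
    _ ≤ _ := integral_mul_le_Lp_mul_Lq_of_nonneg hpq
        (Filter.Eventually.of_forall fun _ => Real.sqrt_nonneg _)
        (Filter.Eventually.of_forall fun _ => Real.sqrt_nonneg _) hSX hSZ
end
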